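/- Assume the form ⟨−,−⟩ is skew-symmetric (and nondegenerate). Let 0 ≤ k ≤ n and let r be an integer. Then there exists a subspace H ⊆ V with dim H = k and dim H − dim(H ∩ H^⊥) = r if and only if r is even and max{0, 2k − n} ≤ r ≤ k. -/

import Mathlib

open Module

/-- Left orthogonal complement `H^⊥ = {v | ⟨v,w⟩ = 0 for all w ∈ H}` of a subspace with
respect to a bilinear form. -/
def bperp {V : Type*} [AddCommGroup V] [Module ℂ V]
    (B : V →ₗ[ℂ] V →ₗ[ℂ] ℂ) (H : Submodule ℂ V) : Submodule ℂ V where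
  carrier := {v | ∀ w ∈ H, B v w = 0}
  add_mem' := by
    intro a b ha hb w hw
    rw [map_add, LinearMap.add_apply, ha w hw, hb w hw, add_zero]
  zero_mem' := by
    intro w hw
    simp
  smul_mem' := by
    intro c a ha w hw
    rw [map_smul, LinearMap.smul_apply, ha w hw, smul_zero]

/-!
A maximal isotropic subspace `L` of an alternating form satisfies `L = L^⊥`, since any vector of
`L^⊥` can be adjoined to `L`. Counting dimensions in `L = L^⊥` gives `2 dim L = dim V + dim ker`.
Hence the rank of an alternating form is even, and applied to the restriction of the form to `H`,
whose kernel is `H ∩ H^⊥`, this gives the parity of `r`. The bound `2k - n ≤ r` is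
`dim (H ∩ H^⊥) ≤ dim H^⊥ = n - k`.

Conversely let `r = 2s`. As `2 (k - s) ≤ n`, some subspace of a maximal isotropic one is isotropic
of dimension `k - s`; call it `L`. As `s ≤ k - s`, there is an `s`-dimensional `M` that meets `L^⊥`
trivially. Then `H = L ⊕ M` has dimension `k` and radical `L ∩ M^⊥ = (L^⊥ ⊕ M)^⊥`, of dimension
`(k - s) - s`.
-/

section Submodule

theorem exists_submodule_le_finrank_eq {R M : Type*} [Semiring R] [StrongRankCondition R]
    [AddCommMonoid M] [Module R M] {N : Submodule R M} {d : ℕ} (hd : d ≤ finrank R N) :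
    ∃ L ≤ N, finrank R L = d := by
  have := nontrivial_of_invariantBasisNumber R
  obtain ⟨f, hf⟩ := exists_linearIndependent_of_le_finrank hd
  refine ⟨(Submodule.span R (Set.range f)).map N.subtype, Submodule.map_subtype_le _ _, ?_⟩
  rw [Submodule.finrank_map_subtype_eq, finrank_span_eq_card hf, Fintype.card_fin]

theorem finrank_sup_of_disjoint {K V : Type*} [DivisionRing K] [AddCommGroup V] [Module K V]
    {L M : Submodule K V} [FiniteDimensional K L] [FiniteDimensional K M] (h : Disjoint L M) :
    finrank K ↥(L ⊔ M) = finrank K L + finrank K M := by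
  rw [← Submodule.finrank_sup_add_finrank_inf_eq, h.eq_bot, finrank_bot, add_zero]

end Submodule

section Orthogonal

variable {R M : Type*} [CommSemiring R] [AddCommMonoid M] [Module R M]
  {B : LinearMap.BilinForm R M}

theorem le_orthogonal_comm (hB : B.IsRefl) {L N : Submodule R M} :
    L ≤ B.orthogonal N ↔ N ≤ B.orthogonal L :=
  ⟨fun h y hy x hx => hB y x (h hx y hy), fun h x hx y hy => hB x y (h hy x hx)⟩

theorem orthogonal_sup (L N : Submodule R M) :
    B.orthogonal (L ⊔ N) = B.orthogonal L ⊓ B.orthogonal N := by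
  refine le_antisymm (le_inf (LinearMap.BilinForm.orthogonal_le le_sup_left)
    (LinearMap.BilinForm.orthogonal_le le_sup_right)) ?_
  rintro x ⟨hxL, hxN⟩ y hy
  obtain ⟨l, hl, n, hn, rfl⟩ := Submodule.mem_sup.mp hy
  rw [map_add, LinearMap.add_apply, hxL l hl, hxN n hn, add_zero]

theorem map_ker_restrict (hB : B.IsRefl) (N : Submodule R M) :
    (LinearMap.ker (B.restrict N)).map N.subtype = N ⊓ B.orthogonal N := by
  refine le_antisymm ?_ (LinearMap.BilinForm.inf_orthogonal_self_le_ker_restrict hB)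
  rintro _ ⟨x, hx, rfl⟩
  exact ⟨x.2, fun y hy => hB _ _ (LinearMap.congr_fun hx ⟨y, hy⟩)⟩

end Orthogonal

section Isotropic

variable {R M : Type*} [CommRing R] [AddCommGroup M] [Module R M] {B : LinearMap.BilinForm R M}

theorem sup_inf_orthogonal_sup_of_disjoint {L N : Submodule R M} (hL : L ≤ B.orthogonal L)
    (hN : Disjoint N (B.orthogonal L)) :
    (L ⊔ N) ⊓ B.orthogonal (L ⊔ N) = L ⊓ B.orthogonal N := by
  rw [orthogonal_sup, ← inf_assoc, sup_inf_assoc_of_le N hL, hN.eq_bot, sup_bot_eq]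

theorem isAlt_of_forall_eq_neg [IsAddTorsionFree R] (hB : ∀ x y, B x y = -B y x) : B.IsAlt :=
  fun x => self_eq_neg.mp (hB x x)

theorem sup_span_singleton_le_orthogonal (hB : B.IsAlt) {L : Submodule R M}
    (hL : L ≤ B.orthogonal L) {x : M} (hx : x ∈ B.orthogonal L) :
    L ⊔ Submodule.span R {x} ≤ B.orthogonal (L ⊔ Submodule.span R {x}) := by
  have hxL : Submodule.span R {x} ≤ B.orthogonal L :=
    (Submodule.span_singleton_le_iff_mem x _).mpr hx
  have hxx : Submodule.span R {x} ≤ B.orthogonal (Submodule.span R {x}) := by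
    rintro _ ha _ hb
    obtain ⟨a, rfl⟩ := Submodule.mem_span_singleton.mp ha
    obtain ⟨b, rfl⟩ := Submodule.mem_span_singleton.mp hb
    simp [hB.self_eq_zero]
  rw [orthogonal_sup]
  exact sup_le (le_inf hL ((le_orthogonal_comm hB.isRefl).mp hxL)) (le_inf hxL hxx)

theorem exists_orthogonal_eq_self [IsNoetherian R M] (hB : B.IsAlt) :
    ∃ L : Submodule R M, B.orthogonal L = L := by
  obtain ⟨L, hL⟩ := exists_maximal_of_wellFoundedGT
    (fun L : Submodule R M => L ≤ B.orthogonal L) ⟨⊥, bot_le⟩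
  refine ⟨L, le_antisymm (fun x hx => ?_) hL.prop⟩
  exact hL.le_of_ge (sup_span_singleton_le_orthogonal hB hL.prop hx) le_sup_left
    (Submodule.mem_sup_right (Submodule.mem_span_singleton_self x))

end Isotropic

section FiniteDimensional

variable {K V : Type*} [Field K] [AddCommGroup V] [Module K V] {B : LinearMap.BilinForm K V}

theorem finrank_range_restrict_add_finrank_inf_orthogonal (hB : B.IsRefl) (H : Submodule K V)
    [FiniteDimensional K H] :
    finrank K (LinearMap.range (B.restrict H)) + finrank K ↥(H ⊓ B.orthogonal H) =
      finrank K H := by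
  rw [← map_ker_restrict hB, Submodule.finrank_map_subtype_eq,
    LinearMap.finrank_range_add_finrank_ker]

variable [FiniteDimensional K V]

theorem two_mul_finrank_of_orthogonal_eq_self (hB : B.IsRefl) {L : Submodule K V}
    (hL : B.orthogonal L = L) :
    2 * finrank K L = finrank K V + finrank K (LinearMap.ker B) := by
  have hker : LinearMap.ker B ≤ L := by
    rw [← LinearMap.BilinForm.orthogonal_top_eq_ker hB, ← hL]
    exact LinearMap.BilinForm.orthogonal_le le_top
  have h := LinearMap.BilinForm.finrank_add_finrank_orthogonal' (B := B) L
  rwa [hL, inf_eq_right.mpr hker, ← two_mul] at h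

theorem even_finrank_range_of_isAlt (hB : B.IsAlt) : Even (finrank K (LinearMap.range B)) := by
  obtain ⟨L, hL⟩ := exists_orthogonal_eq_self hB
  have hdim := two_mul_finrank_of_orthogonal_eq_self hB.isRefl hL
  have hrank := LinearMap.finrank_range_add_finrank_ker B
  exact ⟨finrank K L - finrank K (LinearMap.ker B), by omega⟩

theorem exists_le_orthogonal_finrank_eq (hB : B.IsAlt) {d : ℕ}
    (hd : 2 * d ≤ finrank K V + finrank K (LinearMap.ker B)) :
    ∃ L : Submodule K V, L ≤ B.orthogonal L ∧ finrank K L = d := by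
  obtain ⟨N, hN⟩ := exists_orthogonal_eq_self hB
  rw [← two_mul_finrank_of_orthogonal_eq_self hB.isRefl hN] at hd
  obtain ⟨L, hLN, hLd⟩ := exists_submodule_le_finrank_eq (Nat.le_of_mul_le_mul_left hd two_pos)
  refine ⟨L, ?_, hLd⟩
  calc L ≤ N := hLN
    _ = B.orthogonal N := hN.symm
    _ ≤ B.orthogonal L := LinearMap.BilinForm.orthogonal_le hLN

theorem finrank_add_finrank_orthogonal_of_nondegenerate (hB : B.Nondegenerate)
    (H : Submodule K V) : finrank K H + finrank K (B.orthogonal H) = finrank K V := by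
  rw [LinearMap.BilinForm.finrank_orthogonal hB, Nat.add_sub_of_le H.finrank_le]

theorem finrank_inf_orthogonal_add_finrank_of_disjoint (hB : B.Nondegenerate) (hrefl : B.IsRefl)
    {L M : Submodule K V} (hM : Disjoint M (B.orthogonal L)) :
    finrank K ↥(L ⊓ B.orthogonal M) + finrank K M = finrank K L := by
  have hinf : L ⊓ B.orthogonal M = B.orthogonal (B.orthogonal L ⊔ M) := by
    rw [orthogonal_sup, LinearMap.BilinForm.orthogonal_orthogonal hB hrefl]
  have hL := finrank_add_finrank_orthogonal_of_nondegenerate hB L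
  have hLM := finrank_add_finrank_orthogonal_of_nondegenerate hB (B.orthogonal L ⊔ M)
  rw [finrank_sup_of_disjoint hM.symm] at hLM
  rw [hinf]
  omega

theorem exists_disjoint_orthogonal_finrank_eq (hB : B.Nondegenerate) {L : Submodule K V} {s : ℕ}
    (hs : s ≤ finrank K L) :
    ∃ M : Submodule K V, Disjoint M (B.orthogonal L) ∧ finrank K M = s := by
  obtain ⟨C, hC⟩ := (B.orthogonal L).exists_isCompl
  have hCL : finrank K C = finrank K L := by
    have hcompl := Submodule.finrank_add_eq_of_isCompl hC
    have hL := finrank_add_finrank_orthogonal_of_nondegenerate hB L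
    omega
  obtain ⟨M, hMC, hMs⟩ := exists_submodule_le_finrank_eq (hs.trans_eq hCL.symm)
  exact ⟨M, hC.symm.disjoint.mono_left hMC, hMs⟩

theorem exists_finrank_eq_and_finrank_inf_orthogonal_eq (hB : B.Nondegenerate) (halt : B.IsAlt)
    {d s : ℕ} (hsd : s ≤ d) (hd : 2 * d ≤ finrank K V) :
    ∃ H : Submodule K V, finrank K H = d + s ∧ finrank K ↥(H ⊓ B.orthogonal H) = d - s := by
  obtain ⟨L, hL, rfl⟩ := exists_le_orthogonal_finrank_eq halt (le_add_right hd)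
  obtain ⟨M, hM, rfl⟩ := exists_disjoint_orthogonal_finrank_eq hB hsd
  refine ⟨L ⊔ M, finrank_sup_of_disjoint (hM.symm.mono_left hL), ?_⟩
  rw [sup_inf_orthogonal_sup_of_disjoint hL hM]
  exact Nat.eq_sub_of_add_eq (finrank_inf_orthogonal_add_finrank_of_disjoint hB halt.isRefl hM)

theorem stmt_3_general (hB : B.Nondegenerate) (halt : B.IsAlt) (k : ℕ) (r : ℤ) :
    (∃ H : Submodule K V, finrank K H = k ∧
        (finrank K H : ℤ) - (finrank K ↥(H ⊓ B.orthogonal H) : ℤ) = r) ↔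
      (Even r ∧ max 0 (2 * (k : ℤ) - finrank K V) ≤ r ∧ r ≤ k) := by
  constructor
  · rintro ⟨H, rfl, rfl⟩
    have hrank := finrank_range_restrict_add_finrank_inf_orthogonal halt.isRefl H
    obtain ⟨s, hs⟩ := even_finrank_range_of_isAlt (B := B.restrict H) fun x => halt x
    have hperp := finrank_add_finrank_orthogonal_of_nondegenerate hB H
    have hrad : finrank K ↥(H ⊓ B.orthogonal H) ≤ finrank K (B.orthogonal H) :=
      Submodule.finrank_mono inf_le_right
    exact ⟨⟨s, by omega⟩, max_le (by omega) (by omega), by omega⟩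
  · rintro ⟨⟨s, rfl⟩, hmax, hrk⟩
    obtain ⟨hs, hbound⟩ := max_le_iff.mp hmax
    lift s to ℕ using by omega
    obtain ⟨H, hH, hrad⟩ := exists_finrank_eq_and_finrank_inf_orthogonal_eq hB halt
      (show s ≤ k - s by omega) (by omega)
    exact ⟨H, by omega, by omega⟩

end FiniteDimensional

theorem bperp_eq_orthogonal {V : Type*} [AddCommGroup V] [Module ℂ V]
    {B : LinearMap.BilinForm ℂ V} (hB : B.IsRefl) :
    bperp B = B.orthogonal :=
  funext fun _ => Submodule.ext fun _ => forall₂_congr fun _ _ => ⟨hB _ _, hB _ _⟩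

/-- Proposition 3.7(1) (`prop:orbit-symp`): for a nondegenerate skew-symmetric form on an
`n`-dimensional space and `0 ≤ k ≤ n`, a subspace `H` with `dim H = k` and
`dim H - dim (H ∩ H^⊥) = r` exists if and only if `r` is even and
`max {0, 2k - n} ≤ r ≤ k`. -/
theorem stmt_3 {V : Type*} [AddCommGroup V] [Module ℂ V] [FiniteDimensional ℂ V]
    (n : ℕ) (hn : finrank ℂ V = n)
    (B : V →ₗ[ℂ] V →ₗ[ℂ] ℂ)
    (hB : ∀ v, (∀ w, B v w = 0) → v = 0)
    (halt : ∀ v w, B v w = - B w v)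
    (k : ℕ) (hkn : k ≤ n) (r : ℤ) :
    (∃ H : Submodule ℂ V, finrank ℂ H = k ∧
        (finrank ℂ H : ℤ) - (finrank ℂ ↥(H ⊓ bperp B H) : ℤ) = r) ↔
      (Even r ∧ max 0 (2 * (k : ℤ) - n) ≤ r ∧ r ≤ k) := by
  subst hn
  have hBalt : LinearMap.BilinForm.IsAlt B := isAlt_of_forall_eq_neg halt
  have hBnd : LinearMap.BilinForm.Nondegenerate B :=
    hBalt.isRefl.nondegenerate_iff_separatingLeft.mpr hB
  rw [bperp_eq_orthogonal hBalt.isRefl]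
  exact stmt_3_general hBnd hBalt k r
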